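/- For all integers c and t, there is at most one function a : ℕ → {0,1} with a(0) = a(1) = 0 for which there exists a sequence of integers (t_ℓ)_{ℓ∈ℕ} with t_0 = t and (ℓ+1)·t_{ℓ+1} = t_ℓ − (c − a(ℓ)) for all ℓ ∈ ℕ. That is, if a ≠ b are two such functions admitting integer sequences (t_ℓ) and (s_ℓ) satisfying the respective recurrences, then t_0 ≠ s_0. -/

import Mathlib

/-- A multiple of an integer `m ≥ 3` that is a difference of two elements of `{0,1}` vanishes. -/
theorem eq_of_mul_eq_fin_two_sub {m d : ℤ} (hm : 3 ≤ m) {x y : Fin 2}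
    (h : m * d = ((x : ℕ) : ℤ) - ((y : ℕ) : ℤ)) : x = y := by
  have hx := x.isLt
  have hy := y.isLt
  have hz : ((x : ℕ) : ℤ) - ((y : ℕ) : ℤ) = 0 :=
    Int.eq_zero_of_abs_lt_dvd (Dvd.intro d h) (by rw [abs_lt]; omega)
  omega

/-- **Uniqueness of the 0/1 sequence admitting an integer solution of the recurrence.**
If `a ≠ b` are functions `ℕ → {0,1}` with `a 0 = a 1 = 0`, `b 0 = b 1 = 0`, and
`(t_ℓ)`, `(s_ℓ)` are integer sequences with
`(ℓ+1)·t_{ℓ+1} = t_ℓ − (c − a ℓ)` and `(ℓ+1)·s_{ℓ+1} = s_ℓ − (c − b ℓ)`,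
then `t 0 ≠ s 0`. -/
theorem stmt2 (c : ℤ) (a b : ℕ → Fin 2)
    (ha0 : a 0 = 0) (ha1 : a 1 = 0) (hb0 : b 0 = 0) (hb1 : b 1 = 0)
    (t s : ℕ → ℤ)
    (hat : ∀ ℓ : ℕ, ((ℓ : ℤ) + 1) * t (ℓ + 1) = t ℓ - (c - ((a ℓ : ℕ) : ℤ)))
    (hbs : ∀ ℓ : ℕ, ((ℓ : ℤ) + 1) * s (ℓ + 1) = s ℓ - (c - ((b ℓ : ℕ) : ℤ)))
    (hab : a ≠ b) :
    t 0 ≠ s 0 := by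
  intro h0
  have digit_eq (n : ℕ) (hn : t n = s n) : a n = b n := by
    match n, hn with
    | 0, _ => rw [ha0, hb0]
    | 1, _ => rw [ha1, hb1]
    | k + 2, hn =>
      refine eq_of_mul_eq_fin_two_sub (m := ((k + 2 : ℕ) : ℤ) + 1)
        (d := t (k + 2 + 1) - s (k + 2 + 1)) (by omega) ?_
      linear_combination hat (k + 2) - hbs (k + 2) + hn
  have t_eq_s (n : ℕ) : t n = s n := by
    induction n with
    | zero => exact h0
    | succ n ih =>
      refine mul_left_cancel₀ (show (n : ℤ) + 1 ≠ 0 by omega) ?_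
      rw [hat, hbs, ih, digit_eq n ih]
  exact hab (funext fun n => digit_eq n (t_eq_s n))
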